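/- The first 'unwanted term' of the Bethe ansatz factorizes: let ψ̌ be a function of λ̌ with values in W̌[0] and set g(λ) = G(λ)ψ̌(λ̌). Define g₁(λ) = [a^{(m)}(t_m-t_1; λ_1-γ, λ̌) ⋯ a^{(2)}(t_2-t_1; λ_1-γ, λ̌+γ∑_{k=3}^m ȟ^{(k)}) b^{(1)}(t_1-z; λ_1-γ, λ̌+γ∑_{k=2}^m ȟ^{(k)})] g(λ_1-γ, λ̌) + tr^{(0)}[ c^{(0)}(z-t_1; λ_1-ℓγ, λ̌) a^{(0)}(t_1-t_2; λ_1-(ℓ+1)γ, λ̌) ⋯ a^{(0)}(t_1-t_m; λ_1-(ℓ+m-1)γ, λ̌) Φ̂^{(0)}(t_1) Ř^{(0m)}(t_1-t_m, λ̌) ⋯ Ř^{(02)}(t_1-t_2, λ̌+γ∑_{k=3}^m ȟ^{(k)}) P̌^{(01)} ] g(λ). Then g₁(λ) = G(λ) (θ(γ)/θ(t_1-z)) X^{(1)}(z,t_1,λ) [ K₊(t_1,…,t_m) e^{-γc_1} − (θ(t_1)/θ(t_1-Nℓγ)) K₋(t_1,…,t_m) 𝒯̌^{(m,m-1,…,1)}(t_1)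 ] ψ̌(λ̌), where K_±(t_1,…,t_m) = ∏_{k=2}^m θ(t_1-t_k±γ)/θ(t_1-t_k) and X(z,t,λ) is the diagonal matrix on ℂ^{N-1} with entries [X(z,t,λ)]_{jj} = θ(z-t+λ_j-λ_1+ℓγ)/θ(λ_j-λ_1+ℓγ) for j = 2,…,N. -/

import Mathlib

/-!
For `ψ̌` with values in the zero weight space every index occurs exactly `ℓ` times in a basis
vector, and this makes all scalar prefactors telescope.

* First part: `1/α(u,w) = θ(u-γ)θ(w)/(θ(u)θ(w+γ))`. The `u`-dependent quotients give `K₊`, and the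
  `w`-dependent ones telescope, since for each index `a` the numbers `cntGT f p` over the positions
  carrying `a` are `0, …, ℓ-1` (`prod_cntGT`). The result cancels against
  `G(λ₁-γ, λ̌)/G(λ)`, leaving `X^{(1)}` (`first_term`).
* Second part: for fixed auxiliary index `j` the product of `c`, the `a`'s, `Φ_j` and
  `G(λ-γω_j)/G(λ)` telescopes to `X_{jj}` and `K₋` in the same way (`second_term`).
* The operator under the trace does not act on the first quantum factor before `P̌^{(01)}`, so only
  `j = f_1` contributes and `X_{jj}` becomes `X^{(1)}` (`unwMat_first`). On a fixed total weight
  space its R-matrices have the same dynamical arguments as those of the transfer matrix, up to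
  the weight of the two factors they act on, which is invisible to `R` (`cR0k_match`). Finally
  `Ř(0, λ̌) = P̌` accounts for the last factor `k = 1` (`cR0k_zero`), whence `unwMat_sum`.

The identity `Ř(0, λ̌) = P̌` needs `θ(γ) ≠ 0`; when `θ(γ) = 0` both sides vanish because
`β = 0`.
-/

noncomputable section

open Complex BigOperators

namespace Ruijsenaars

/-- Jacobi's first theta function
`θ(z) = -∑_{j∈ℤ} exp(πi(j+1/2)²τ + 2πi(j+1/2)(z+1/2))`. -/
def theta (τ z : ℂ) : ℂ :=
  - ∑' j : ℤ, Complex.exp (Real.pi * Complex.I * ((j : ℂ) + 1 / 2) ^ 2 * τ +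
      2 * Real.pi * Complex.I * ((j : ℂ) + 1 / 2) * (z + 1 / 2))

/-- `α(z,w) = θ(z)θ(w+γ)/(θ(z-γ)θ(w))`. -/
def alpha (τ γ z w : ℂ) : ℂ :=
  theta τ z * theta τ (w + γ) / (theta τ (z - γ) * theta τ w)

/-- `β(z,w) = -θ(z+w)θ(γ)/(θ(z-γ)θ(w))`. -/
def beta (τ γ z w : ℂ) : ℂ :=
  - (theta τ (z + w) * theta τ γ / (theta τ (z - γ) * theta τ w))

/-- The elliptic dynamical R-matrix `R(z,λ)` on `ℂ^N ⊗ ℂ^N`,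
`R(z,λ) = ∑_i e_{ii}⊗e_{ii} + ∑_{i≠j} α(z,λ_i-λ_j) e_{ii}⊗e_{jj}
        + ∑_{i≠j} β(z,λ_i-λ_j) e_{ij}⊗e_{ji}`,
written as a matrix on the standard basis of `ℂ^N ⊗ ℂ^N`: the entry at row `(i,j)`,
column `(k,l)` is the coefficient `R_{ik,jl}(z,λ)` of `e_{ik} ⊗ e_{jl}`. -/
def Rm (τ γ : ℂ) {N : ℕ} (z : ℂ) (lam : Fin N → ℂ) :
    Matrix (Fin N × Fin N) (Fin N × Fin N) ℂ := fun p q =>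
  if p = q then (if p.1 = p.2 then 1 else alpha τ γ z (lam p.1 - lam p.2))
  else if p.1 = q.2 ∧ p.2 = q.1 then beta τ γ z (lam p.1 - lam p.2) else 0

/-- The shift `λ ↦ λ - γ ω_j` by the `j`-th standard basis vector. -/
def shift1 (γ : ℂ) {N : ℕ} (lam : Fin N → ℂ) (j : Fin N) : Fin N → ℂ :=
  fun i => lam i - if i = j then γ else 0

/-- The embedding of the index set `{2,…,N}` (encoded as `Fin (N-1)`) into
`{1,…,N}` (encoded as `Fin N`). -/
def iot {N : ℕ} (k : Fin (N - 1)) : Fin N := ⟨k.1 + 1, by omega⟩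

/-- `Ř^{(0k)}(zz, λ̌ + cc·∑_{r∈S} ȟ^{(r)})` acting on `ℂ^{N-1} ⊗ W̌`,
`W̌ = (ℂ^{N-1})^{⊗m}`; the dynamical argument is evaluated via the weights of
the tensor factors in `S`. -/
def cR0k (τ γ zz cc : ℂ) {N mm : ℕ} (lc : Fin (N - 1) → ℂ) (k : Fin mm)
    (S : Finset (Fin mm)) :
    Matrix (Fin (N - 1) × (Fin mm → Fin (N - 1)))
      (Fin (N - 1) × (Fin mm → Fin (N - 1))) ℂ := fun p q =>
  if ∀ j, j ≠ k → p.2 j = q.2 j then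
    Rm τ γ zz (fun i => lc i + cc * (((S.filter (fun r => q.2 r = i)).card : ℕ) : ℂ))
      (p.1, p.2 k) (q.1, q.2 k)
  else 0

/-- The ordered product
`Ř^{(0,k_1)}(z-t_{k_1}, λ̌ + cc·∑_{r=2}^m ȟ^{(k_r)}) ⋯ Ř^{(0,k_m)}(z-t_{k_m}, λ̌)`
over a sequence `(k_1,…,k_m)`. -/
def cProd (τ γ z cc : ℂ) {N mm : ℕ} (lc : Fin (N - 1) → ℂ) (t : Fin mm → ℂ) :
    List (Fin mm) →
      Matrix (Fin (N - 1) × (Fin mm → Fin (N - 1)))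
        (Fin (N - 1) × (Fin mm → Fin (N - 1))) ℂ
  | [] => 1
  | k :: rest => cR0k τ γ (z - t k) cc lc k rest.toFinset * cProd τ γ z cc lc t rest

/-- The total shift `Γ̌^{(1,…,m)}` (for `sign = -1`), resp. its inverse
(for `sign = 1`), acting on `W̌`-valued functions of `λ ∈ ℂ^N`. -/
def gammaTot (γ sign : ℂ) {N mm : ℕ}
    (ψ : (Fin N → ℂ) → (Fin mm → Fin (N - 1)) → ℂ) :
    (Fin N → ℂ) → (Fin mm → Fin (N - 1)) → ℂ := fun lam f =>
  ψ (fun a => lam a + sign * γ *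
      (((Finset.univ.filter (fun k => iot (f k) = a)).card : ℕ) : ℂ)) f

/-- The nested transfer matrix `𝒯̌^{(k_1,…,k_m)}(z)`, defined by
`Γ̌^{(1,…,m)} 𝒯̌^{(k_1,…,k_m)}(z) (Γ̌^{(1,…,m)})⁻¹
 = tr^{(0)}[Ř^{(0,k_1)}(z-t_{k_1}, λ̌-γ∑_{r≥2}ȟ^{(k_r)}) ⋯ Ř^{(0,k_m)}(z-t_{k_m}, λ̌) Γ̌^{(0)}]`. -/
def cTransfer (τ γ : ℂ) {N mm : ℕ} (t : Fin mm → ℂ) (ks : List (Fin mm)) (z : ℂ)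
    (ψ : (Fin N → ℂ) → (Fin mm → Fin (N - 1)) → ℂ) :
    (Fin N → ℂ) → (Fin mm → Fin (N - 1)) → ℂ :=
  gammaTot γ 1 (fun lam f =>
    ∑ j : Fin (N - 1), ∑ g,
      cProd τ γ z (-γ) (fun a => lam (iot a)) t ks (j, f) (j, g) *
        (gammaTot γ (-1) ψ) (shift1 γ lam (iot j)) g)

/-- The sequence `(m, m-1, …, 1)`. -/
def seqRev (mm : ℕ) : List (Fin mm) := (List.finRange mm).reverse

/-- `G(λ) = e^{c₁λ₁} ∏_{j=2}^N ∏_{p=1}^ℓ θ(λ₁-λ_j-pγ)`. -/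
def Gfun (τ γ c1 : ℂ) (ℓ : ℕ) {N : ℕ} [NeZero N] (lam : Fin N → ℂ) : ℂ :=
  Complex.exp (c1 * lam 0) *
    ∏ j : Fin (N - 1), ∏ p ∈ Finset.Icc 1 ℓ, theta τ (lam 0 - lam (iot j) - (p : ℂ) * γ)

/-- For a basis vector `f` of `W̌` and a tensor position `p`, the number of
positions `k > p` with `f k = f p` (the dynamical shift `∑_{k>p} ȟ^{(k)}`
evaluated on `f` at the index carried by the factor `p`). -/
def cntGT {mm K : ℕ} (f : Fin mm → Fin K) (p : Fin mm) : ℕ :=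
  (Finset.univ.filter (fun k => p < k ∧ f k = f p)).card

/-- `Φ_j(z,λ) = θ(z)θ(λ_j-λ_1+dγ)/(θ(z-dγ)θ(λ_j-λ_1))` with `d = Nℓ`,
`j = 2,…,N`. -/
def PhiFn (τ γ : ℂ) (d : ℕ) {N : ℕ} [NeZero N] (z : ℂ) (lam : Fin N → ℂ)
    (j : Fin (N - 1)) : ℂ :=
  theta τ z * theta τ (lam (iot j) - lam 0 + (d : ℂ) * γ) /
    (theta τ (z - (d : ℂ) * γ) * theta τ (lam (iot j) - lam 0))

/-- The product `Ř^{(0m)}(z-t_m, λ̌) Ř^{(0,m-1)}(z-t_{m-1}, λ̌+γȟ^{(m)}) ⋯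
Ř^{(01)}(z-t_1, λ̌+γ∑_{k=2}^m ȟ^{(k)})` on `ℂ^{N-1} ⊗ W̌`. -/
def plusProd (τ γ z : ℂ) {N mm : ℕ} (t : Fin mm → ℂ) (lc : Fin (N - 1) → ℂ) :
    Matrix (Fin (N - 1) × (Fin mm → Fin (N - 1)))
      (Fin (N - 1) × (Fin mm → Fin (N - 1))) ℂ :=
  (((List.finRange mm).reverse).map
    (fun k => cR0k τ γ (z - t k) γ lc k (Finset.univ.filter (fun r => k < r)))).prod

/-- The permutation operator `P̌^{(01)}` of the auxiliary factor and the first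
tensor factor `a0` of `W̌`. -/
def permM {N mm : ℕ} (a0 : Fin mm) :
    Matrix (Fin (N - 1) × (Fin mm → Fin (N - 1)))
      (Fin (N - 1) × (Fin mm → Fin (N - 1))) ℂ := fun p q =>
  if (∀ j, j ≠ a0 → p.2 j = q.2 j) ∧ p.1 = q.2 a0 ∧ p.2 a0 = q.1 then 1 else 0

/-! ### Oddness of theta, telescoping products and shifts of `G` -/

lemma theta_neg (τ z : ℂ) : theta τ (-z) = -theta τ z := by
  unfold theta
  congr 1
  rw [← tsum_neg]
  refine Eq.trans ((Equiv.subLeft (-1 : ℤ)).tsum_eq _).symm (tsum_congr fun j => ?_)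
  have h : Complex.exp (-(2 * Real.pi * Complex.I * ((j : ℂ) + 1 / 2))) = -1 := by
    rw [show -(2 * (Real.pi : ℂ) * Complex.I * ((j : ℂ) + 1 / 2))
        = ((-j - 1 : ℤ) : ℂ) * (2 * Real.pi * Complex.I) + Real.pi * Complex.I by
      push_cast; ring, Complex.exp_add, Complex.exp_int_mul_two_pi_mul_I, Complex.exp_pi_mul_I,
      one_mul]
  have h2 : ∀ w, -Complex.exp w
      = Complex.exp (w + -(2 * Real.pi * Complex.I * ((j : ℂ) + 1 / 2))) := by
    intro w
    rw [Complex.exp_add, h, mul_neg_one]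
  rw [Equiv.subLeft_apply, h2]
  congr 1
  push_cast
  ring

lemma theta_zero (τ : ℂ) : theta τ 0 = 0 := by
  have h := theta_neg τ 0
  rw [neg_zero] at h
  exact self_eq_neg.mp h

lemma theta_sub_comm (τ a b : ℂ) : theta τ (a - b) = -theta τ (b - a) := by
  rw [← theta_neg, neg_sub]

lemma iot_injective {N : ℕ} : Function.Injective (iot (N := N)) := by
  intro a b h
  simpa [iot, Fin.ext_iff] using h

lemma iot_ne_zero {M : ℕ} (k : Fin (M + 1)) : (iot k : Fin (M + 2)) ≠ 0 := by
  intro h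
  simpa [iot] using congrArg Fin.val h

/-- Counting the later elements of a finite set enumerates `0, …, #S - 1`. -/
lemma prod_card_gt {α : Type*} [LinearOrder α] (h : ℕ → ℂ) (S : Finset α) :
    ∏ p ∈ S, h (S.filter (fun k => p < k)).card = ∏ c ∈ Finset.range S.card, h c := by
  induction S using Finset.induction_on_min with
  | empty => simp
  | insert a S ha ih =>
    have hna : a ∉ S := fun h => lt_irrefl _ (ha a h)
    rw [Finset.prod_insert hna, Finset.card_insert_of_notMem hna, Finset.prod_range_succ, ← ih,
      mul_comm]
    congr 1
    · refine Finset.prod_congr rfl fun p hp => ?_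
      rw [Finset.filter_insert, if_neg (ha p hp).not_gt]
    · rw [Finset.filter_insert, if_neg (lt_irrefl a), Finset.filter_true_of_mem ha]

/-- On a basis vector of `W̌[0]`, the pairs `(f p, cntGT f p)` run over all
`(a, c)` with `c < ℓ`. -/
lemma prod_cntGT {mm K ℓ : ℕ} (f : Fin mm → Fin K)
    (hf : ∀ a, (Finset.univ.filter (fun k => f k = a)).card = ℓ) (F : Fin K → ℕ → ℂ) :
    ∏ p, F (f p) (cntGT f p) = ∏ a, ∏ c ∈ Finset.range ℓ, F a c := by
  rw [← Finset.prod_fiberwise Finset.univ f]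
  refine Finset.prod_congr rfl fun a _ => ?_
  rw [← hf a, ← prod_card_gt]
  refine Finset.prod_congr rfl fun p hp => ?_
  have hp' : f p = a := by simpa using hp
  rw [hp', cntGT, Finset.filter_filter]
  congr 2
  ext k
  simp [hp', and_comm]

lemma cntGT_first {mm K ℓ : ℕ} (hpos : 0 < mm) (f : Fin mm → Fin K)
    (hf : ∀ a, (Finset.univ.filter (fun k => f k = a)).card = ℓ + 1) :
    cntGT f ⟨0, hpos⟩ = ℓ := by
  have h := hf (f ⟨0, hpos⟩)
  have hE : (Finset.univ.filter (fun k => (⟨0, hpos⟩ : Fin mm) < k ∧ f k = f ⟨0, hpos⟩))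
      = (Finset.univ.filter (fun k => f k = f ⟨0, hpos⟩)).erase ⟨0, hpos⟩ := by
    ext k
    simp [Fin.lt_def, Fin.ext_iff, Nat.pos_iff_ne_zero]
  rw [cntGT, hE, Finset.card_erase_of_mem (by simp), h]
  rfl

lemma prod_Icc_shift_up (h : ℕ → ℂ) (ℓ : ℕ) :
    (∏ p ∈ Finset.Icc 1 ℓ, h (p + 1)) * h 1 = (∏ p ∈ Finset.Icc 1 ℓ, h p) * h (ℓ + 1) := by
  induction ℓ with
  | zero => simp
  | succ n ih =>
    rw [Finset.prod_Icc_succ_top (by omega), Finset.prod_Icc_succ_top (by omega)]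
    linear_combination h (n + 1 + 1) * ih

lemma prod_Icc_shift_down (h : ℕ → ℂ) (ℓ : ℕ) :
    (∏ p ∈ Finset.Icc 1 ℓ, h (p - 1)) * h ℓ = (∏ p ∈ Finset.Icc 1 ℓ, h p) * h 0 := by
  induction ℓ with
  | zero => simp
  | succ n ih =>
    rw [Finset.prod_Icc_succ_top (by omega), Finset.prod_Icc_succ_top (by omega),
      Nat.add_sub_cancel]
    linear_combination h (n + 1) * ih

/-- Behaviour of `G` under the shift `λ₁ ↦ λ₁ - γ`. -/
lemma Gfun_shift_zero (τ γ c1 : ℂ) (ℓ M : ℕ) (lam : Fin (M + 2) → ℂ) :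
    Gfun τ γ c1 ℓ (shift1 γ lam 0) * ∏ a : Fin (M + 1), theta τ (lam (iot a) - lam 0 + γ)
      = Complex.exp (-(γ * c1)) * Gfun τ γ c1 ℓ lam *
        ∏ a : Fin (M + 1), theta τ (lam (iot a) - lam 0 + ((ℓ : ℂ) + 1) * γ) := by
  have key : (∏ a : Fin (M + 1), ∏ p ∈ Finset.Icc 1 ℓ,
        theta τ (shift1 γ lam 0 0 - shift1 γ lam 0 (iot a) - (p : ℂ) * γ)) *
        ∏ a : Fin (M + 1), theta τ (lam (iot a) - lam 0 + γ)
      = (∏ a : Fin (M + 1), ∏ p ∈ Finset.Icc 1 ℓ, theta τ (lam 0 - lam (iot a) - (p : ℂ) * γ)) *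
        ∏ a : Fin (M + 1), theta τ (lam (iot a) - lam 0 + ((ℓ : ℂ) + 1) * γ) := by
    rw [← Finset.prod_mul_distrib, ← Finset.prod_mul_distrib]
    refine Finset.prod_congr rfl fun a _ => ?_
    have h := prod_Icc_shift_up (fun p => theta τ (lam 0 - lam (iot a) - (p : ℂ) * γ)) ℓ
    simp only [Nat.cast_add, Nat.cast_one] at h
    rw [show lam (iot a) - lam 0 + γ = -(lam 0 - lam (iot a) - 1 * γ) by ring, theta_neg,
      show lam (iot a) - lam 0 + ((ℓ : ℂ) + 1) * γ = -(lam 0 - lam (iot a) - (ℓ + 1) * γ) by ring,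
      theta_neg, mul_neg, mul_neg, ← h]
    congr 2
    refine Finset.prod_congr rfl fun p _ => ?_
    congr 1
    simp only [shift1, if_true, if_neg (iot_ne_zero a)]
    ring
  unfold Gfun
  rw [mul_assoc]
  erw [key]
  rw [show c1 * shift1 γ lam 0 0 = -(γ * c1) + c1 * lam 0 by simp [shift1]; ring, Complex.exp_add]
  ring!

/-- Behaviour of `G` under the shift `λ_j ↦ λ_j - γ`, `j ≥ 2`. -/
lemma Gfun_shift_iot (τ γ c1 : ℂ) (ℓ M : ℕ) (lam : Fin (M + 2) → ℂ) (j : Fin (M + 1)) :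
    Gfun τ γ c1 ℓ (shift1 γ lam (iot j)) * theta τ (lam (iot j) - lam 0 + (ℓ : ℂ) * γ)
      = Gfun τ γ c1 ℓ lam * theta τ (lam (iot j) - lam 0) := by
  have h0 : shift1 γ lam (iot j) 0 = lam 0 := by
    simp [shift1, (iot_ne_zero j).symm]
  have key : (∏ a : Fin (M + 1), ∏ p ∈ Finset.Icc 1 ℓ,
        theta τ (lam 0 - shift1 γ lam (iot j) (iot a) - (p : ℂ) * γ)) *
        theta τ (lam (iot j) - lam 0 + (ℓ : ℂ) * γ)
      = (∏ a : Fin (M + 1), ∏ p ∈ Finset.Icc 1 ℓ, theta τ (lam 0 - lam (iot a) - (p : ℂ) * γ)) *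
        theta τ (lam (iot j) - lam 0) := by
    rw [← Finset.mul_prod_erase _ _ (Finset.mem_univ j), ← Finset.mul_prod_erase _
      (fun a : Fin (M + 1) => ∏ p ∈ Finset.Icc 1 ℓ, theta τ (lam 0 - lam (iot a) - (p : ℂ) * γ))
      (Finset.mem_univ j)]
    have hE : ∏ a ∈ Finset.univ.erase j, ∏ p ∈ Finset.Icc 1 ℓ,
          theta τ (lam 0 - shift1 γ lam (iot j) (iot a) - (p : ℂ) * γ)
        = ∏ a ∈ Finset.univ.erase j, ∏ p ∈ Finset.Icc 1 ℓ,
          theta τ (lam 0 - lam (iot a) - (p : ℂ) * γ) := by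
      refine Finset.prod_congr rfl fun a ha => ?_
      have : iot a ≠ (iot j : Fin (M + 2)) := fun h => (Finset.ne_of_mem_erase ha) (iot_injective h)
      simp [shift1, this]
    have h := prod_Icc_shift_down (fun p => theta τ (lam 0 - lam (iot j) - (p : ℂ) * γ)) ℓ
    have hJ : ∏ p ∈ Finset.Icc 1 ℓ, theta τ (lam 0 - shift1 γ lam (iot j) (iot j) - (p : ℂ) * γ)
        = ∏ p ∈ Finset.Icc 1 ℓ, theta τ (lam 0 - lam (iot j) - ((p - 1 : ℕ) : ℂ) * γ) := by
      refine Finset.prod_congr rfl fun p hp => ?_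
      congr 1
      rw [Nat.cast_sub (Finset.mem_Icc.mp hp).1]
      simp only [shift1, if_true, Nat.cast_one]
      ring
    rw [hE, hJ, show lam (iot j) - lam 0 + (ℓ : ℂ) * γ = -(lam 0 - lam (iot j) - (ℓ : ℂ) * γ) by
      ring, theta_neg, show lam (iot j) - lam 0 = -(lam 0 - lam (iot j) - ((0 : ℕ) : ℂ) * γ) by
      simp, theta_neg]
    linear_combination -(∏ a ∈ Finset.univ.erase j, ∏ p ∈ Finset.Icc 1 ℓ,
          theta τ (lam 0 - lam (iot a) - (p : ℂ) * γ)) * h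
  unfold Gfun
  rw [h0, mul_assoc]
  erw [key]
  ring!

/-! ### Weight conservation and the operator under the trace -/

/-- The weight of a basis vector of `ℂ^{N-1} ⊗ W̌`: the multiplicity of each index among the
auxiliary and the quantum factors. -/
def wt {K mm : ℕ} (p : Fin K × (Fin mm → Fin K)) (i : Fin K) : ℕ :=
  (∑ r, if p.2 r = i then 1 else 0) + if p.1 = i then 1 else 0

lemma wt_eq_of_swap {K mm : ℕ} {p q : Fin K × (Fin mm → Fin K)} (k : Fin mm)
    (h : ∀ j, j ≠ k → p.2 j = q.2 j) (h1 : p.1 = q.2 k) (h2 : p.2 k = q.1) : wt p = wt q := by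
  funext i
  unfold wt
  rw [← Finset.add_sum_erase _ _ (Finset.mem_univ k),
    ← Finset.add_sum_erase _ (fun r => if q.2 r = i then 1 else 0) (Finset.mem_univ k),
    Finset.sum_congr rfl fun r hr => by rw [h r (Finset.ne_of_mem_erase hr)], h1, h2]
  ring

lemma Rm_ne_zero {τ γ z : ℂ} {N : ℕ} {lam : Fin N → ℂ} {p q : Fin N × Fin N}
    (h : Rm τ γ z lam p q ≠ 0) : p = q ∨ (p.1 = q.2 ∧ p.2 = q.1) := by
  by_contra hc
  rw [not_or] at hc
  exact h (by rw [Rm, if_neg hc.1, if_neg hc.2])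

/-- The entries of `R` depend only on the difference of the dynamical parameters at the two
indices carried by the column: `R` has weight zero. -/
lemma Rm_congr (τ γ z : ℂ) {N : ℕ} {lam lam' : Fin N → ℂ} (p q : Fin N × Fin N)
    (h : q.1 ≠ q.2 → lam q.1 - lam q.2 = lam' q.1 - lam' q.2) :
    Rm τ γ z lam p q = Rm τ γ z lam' p q := by
  obtain ⟨p1, p2⟩ := p
  obtain ⟨q1, q2⟩ := q
  unfold Rm
  split_ifs with h1 h2 h3
  · rfl
  · simp only [Prod.mk.injEq] at h1 h2
    obtain ⟨rfl, rfl⟩ := h1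
    rw [show lam p1 - lam p2 = lam' p1 - lam' p2 from h h2]
  · obtain ⟨rfl, rfl⟩ := h3
    have hne : p2 ≠ p1 := fun e => h1 (by simp [e])
    have := h hne
    simp only at this ⊢
    rw [show lam p1 - lam p2 = lam' p1 - lam' p2 by linear_combination -this]
  · rfl

/-- At spectral parameter `0` the R-matrix is the permutation operator. -/
lemma Rm_zero {τ γ : ℂ} {N : ℕ} {lam : Fin N → ℂ} (hγ : theta τ γ ≠ 0)
    (hlam : ∀ a b, a ≠ b → theta τ (lam a - lam b) ≠ 0) (p q : Fin N × Fin N) :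
    Rm τ γ 0 lam p q = if p.1 = q.2 ∧ p.2 = q.1 then 1 else 0 := by
  obtain ⟨p1, p2⟩ := p
  obtain ⟨q1, q2⟩ := q
  unfold Rm
  by_cases h1 : (p1, p2) = (q1, q2)
  · rw [if_pos h1]
    simp only [Prod.mk.injEq] at h1
    obtain ⟨rfl, rfl⟩ := h1
    by_cases h2 : p1 = p2
    · simp [h2]
    · simp [h2, alpha, theta_zero]
  · rw [if_neg h1]
    by_cases h3 : p1 = q2 ∧ p2 = q1
    · rw [if_pos h3, if_pos h3]
      have hne : p1 ≠ p2 := fun e => h1 (by rw [← h3.1, ← h3.2, e])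
      have := hlam _ _ hne
      simp only [beta, zero_add, zero_sub, theta_neg]
      field_simp
    · rw [if_neg h3, if_neg h3]

lemma cR0k_wt {τ γ zz cc : ℂ} {N mm : ℕ} {lc : Fin (N - 1) → ℂ} {k : Fin mm}
    {S : Finset (Fin mm)} {p q : Fin (N - 1) × (Fin mm → Fin (N - 1))}
    (h : cR0k τ γ zz cc lc k S p q ≠ 0) : wt p = wt q := by
  unfold cR0k at h
  split_ifs at h with h1
  · rcases Rm_ne_zero h with h2 | h2
    · simp only [Prod.mk.injEq] at h2
      have : p = q := Prod.ext h2.1 (funext fun r => by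
        by_cases hr : r = k
        · rw [hr, h2.2]
        · exact h1 r hr)
      rw [this]
    · exact wt_eq_of_swap k h1 h2.1 h2.2
  · exact absurd rfl h

lemma permM_wt {N mm : ℕ} {a0 : Fin mm} {p q : Fin (N - 1) × (Fin mm → Fin (N - 1))}
    (h : permM a0 p q ≠ 0) : wt p = wt q := by
  unfold permM at h
  split_ifs at h with h1
  · exact wt_eq_of_swap a0 h1.1 h1.2.1 h1.2.2
  · exact absurd rfl h

lemma cR0k_zero {τ γ : ℂ} {N mm : ℕ} {lc : Fin (N - 1) → ℂ} (cc : ℂ) (a0 : Fin mm)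
    (hγ : theta τ γ ≠ 0) (hlc : ∀ a b, a ≠ b → theta τ (lc a - lc b) ≠ 0) :
    cR0k τ γ 0 cc lc a0 ∅ = permM a0 := by
  funext p q
  unfold cR0k permM
  by_cases h : ∀ j, j ≠ a0 → p.2 j = q.2 j
  · rw [if_pos h, Rm_zero hγ (by simpa using hlc)]
    exact if_congr ⟨fun h' => ⟨h, h'⟩, fun h' => h'.2⟩ rfl rfl
  · rw [if_neg h, if_neg (fun h' => h h'.1)]

/-- A quantity conserved by every factor is conserved by the product. -/
lemma prod_conserved {ι X : Type*} [Fintype ι] [DecidableEq ι] (φ : ι → X)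
    (L : List (Matrix ι ι ℂ)) (h : ∀ A ∈ L, ∀ p q, A p q ≠ 0 → φ p = φ q) (p q : ι)
    (hpq : L.prod p q ≠ 0) : φ p = φ q := by
  induction L generalizing p with
  | nil =>
    rw [List.prod_nil] at hpq
    by_contra hne
    exact hpq (Matrix.one_apply_ne fun e => hne (by rw [e]))
  | cons A L ih =>
    rw [List.prod_cons, Matrix.mul_apply] at hpq
    obtain ⟨r, -, hr⟩ := Finset.exists_ne_zero_of_sum_ne_zero hpq
    rw [h A (by simp) p r (left_ne_zero_of_mul hr)]
    exact ih (fun B hB => h B (List.mem_cons_of_mem _ hB)) r (right_ne_zero_of_mul hr)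

/-- Two products of operators conserving `φ` agree on a level set of `φ` as soon as their
factors do. -/
lemma prod_congr_on {ι κ X : Type*} [Fintype ι] [DecidableEq ι] (φ : ι → X) (w : X)
    (A B : κ → Matrix ι ι ℂ) (L : List κ)
    (hB : ∀ k ∈ L, ∀ p q, B k p q ≠ 0 → φ p = φ q)
    (hAB : ∀ k ∈ L, ∀ p q, φ p = w → A k p q = B k p q) (p q : ι) (hp : φ p = w) :
    (L.map A).prod p q = (L.map B).prod p q := by
  induction L generalizing p with
  | nil => rfl
  | cons k L ih =>
    rw [List.map_cons, List.map_cons, List.prod_cons, List.prod_cons, Matrix.mul_apply,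
      Matrix.mul_apply]
    refine Finset.sum_congr rfl fun r _ => ?_
    rw [hAB k (by simp) p r hp]
    by_cases h0 : B k p r = 0
    · rw [h0, zero_mul, zero_mul]
    · rw [ih (fun k' hk' => hB k' (List.mem_cons_of_mem _ hk'))
        (fun k' hk' => hAB k' (List.mem_cons_of_mem _ hk')) r
        ((hB k (by simp) p r h0).symm.trans hp)]

lemma wt_split {K mm : ℕ} (q : Fin K × (Fin mm → Fin K)) (k : Fin mm) (i : Fin K) :
    wt q i = ((Finset.univ.filter (fun r => r < k)).filter (fun r => q.2 r = i)).card
      + ((Finset.univ.filter (fun r => k < r)).filter (fun r => q.2 r = i)).card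
      + (if q.2 k = i then 1 else 0) + (if q.1 = i then 1 else 0) := by
  unfold wt
  rw [Finset.card_filter, Finset.card_filter, Finset.sum_filter, Finset.sum_filter,
    ← Finset.sum_add_distrib, ← Finset.add_sum_erase _ _ (Finset.mem_univ k),
    ← Finset.add_sum_erase _ (fun r => (if r < k then if q.2 r = i then 1 else 0 else 0) +
      if k < r then if q.2 r = i then 1 else 0 else 0) (Finset.mem_univ k)]
  have : ∑ r ∈ Finset.univ.erase k, (if q.2 r = i then 1 else 0)
      = ∑ r ∈ Finset.univ.erase k, ((if r < k then if q.2 r = i then 1 else 0 else 0) +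
        if k < r then if q.2 r = i then 1 else 0 else 0) := by
    refine Finset.sum_congr rfl fun r hr => ?_
    rcases lt_or_gt_of_ne (Finset.ne_of_mem_erase hr) with h | h
    · simp [h, h.not_gt]
    · simp [h, h.not_gt]
  rw [this]
  simp only [lt_irrefl, if_false]
  ring

/-- On vectors of total weight `∑_r ω_{f r} + ω_j`, the shift `γ∑_{r>k} ȟ^{(r)} - γω_j` and the
shift `γ∑_r ω_{f r} - γ∑_{r<k} ȟ^{(r)}` differ by the weight of the two factors `R` acts on, which
`R` does not see. -/
lemma cR0k_match (τ γ zz : ℂ) {N mm : ℕ} (lc : Fin (N - 1) → ℂ) (k : Fin mm) (j : Fin (N - 1))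
    (f : Fin mm → Fin (N - 1)) (p q : Fin (N - 1) × (Fin mm → Fin (N - 1)))
    (hp : wt p = wt (j, f)) :
    cR0k τ γ zz γ (fun a => lc a - if a = j then γ else 0) k
        (Finset.univ.filter (fun r => k < r)) p q
      = cR0k τ γ zz (-γ)
        (fun a => lc a + γ * (((Finset.univ.filter (fun r => f r = a)).card : ℕ) : ℂ)) k
        (Finset.univ.filter (fun r => r < k)) p q := by
  by_cases hw : wt p = wt q
  swap
  · rw [not_not.mp (mt cR0k_wt hw), not_not.mp (mt cR0k_wt hw)]
  unfold cR0k
  split_ifs with h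
  swap
  · rfl
  refine Rm_congr _ _ _ _ _ fun hne => ?_
  have key : ∀ i, (((Finset.univ.filter (fun r => f r = i)).card : ℕ) : ℂ)
      + (if i = j then 1 else 0) =
      (((Finset.univ.filter (fun r => r < k)).filter (fun r => q.2 r = i)).card : ℂ)
      + (((Finset.univ.filter (fun r => k < r)).filter (fun r => q.2 r = i)).card : ℂ)
      + (if q.2 k = i then 1 else 0) + (if q.1 = i then 1 else 0) := by
    intro i
    have e := congrFun (hw.symm.trans hp) i
    rw [wt_split q k i, wt, ← Finset.card_filter] at e
    rw [show (if i = j then (1 : ℂ) else 0) = if j = i then 1 else 0 by simp only [eq_comm]]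
    exact_mod_cast e.symm
  have k1 := key q.1
  have k2 := key (q.2 k)
  simp only at hne
  simp only [if_true, if_neg hne, if_neg hne.symm] at k1 k2
  have e : ∀ i : Fin (N - 1), (if i = j then γ else 0) = γ * (if i = j then 1 else 0) := by
    intro i; split_ifs <;> simp
  simp only [e]
  linear_combination γ * k2 - γ * k1

lemma cProd_eq_prod (τ γ z cc : ℂ) {N mm : ℕ} (lc : Fin (N - 1) → ℂ) (t : Fin mm → ℂ)
    (L : List (Fin mm)) (hs : L.Pairwise (· > ·)) (hd : ∀ k ∈ L, ∀ r < k, r ∈ L) :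
    cProd τ γ z cc lc t L = (L.map (fun k => cR0k τ γ (z - t k) cc lc k
      (Finset.univ.filter (fun r => r < k)))).prod := by
  induction L with
  | nil => rfl
  | cons k L ih =>
    rw [List.pairwise_cons] at hs
    have hset : L.toFinset = Finset.univ.filter (fun r => r < k) := by
      ext r
      simp only [List.mem_toFinset, Finset.mem_filter, Finset.mem_univ, true_and]
      refine ⟨fun hr => hs.1 r hr, fun hr => ?_⟩
      exact (List.mem_cons.mp (hd k (by simp) r hr)).resolve_left hr.ne
    rw [cProd, List.map_cons, List.prod_cons, hset, ih hs.2 fun k' hk' r hr => ?_]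
    exact (List.mem_cons.mp (hd k' (List.mem_cons_of_mem _ hk') r hr)).resolve_left
      (hr.trans (hs.1 k' hk')).ne

lemma cProd_wt {τ γ z cc : ℂ} {N mm : ℕ} {lc : Fin (N - 1) → ℂ} {t : Fin mm → ℂ}
    {L : List (Fin mm)} {p q : Fin (N - 1) × (Fin mm → Fin (N - 1))}
    (h : cProd τ γ z cc lc t L p q ≠ 0) : wt p = wt q := by
  induction L generalizing p with
  | nil =>
    rw [cProd] at h
    by_contra hne
    exact h (Matrix.one_apply_ne fun e => hne (by rw [e]))
  | cons k L ih =>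
    rw [cProd, Matrix.mul_apply] at h
    obtain ⟨r, -, hr⟩ := Finset.exists_ne_zero_of_sum_ne_zero h
    exact (cR0k_wt (left_ne_zero_of_mul hr)).trans (ih (right_ne_zero_of_mul hr))

lemma finRange_reverse_split {mm : ℕ} (hpos : 0 < mm) :
    (List.finRange mm).reverse = (List.finRange mm).reverse.dropLast ++ [⟨0, hpos⟩] ∧
      ∀ k ∈ (List.finRange mm).reverse.dropLast, k ≠ ⟨0, hpos⟩ := by
  obtain ⟨n, rfl⟩ := Nat.exists_eq_succ_of_ne_zero hpos.ne'
  rw [List.finRange_succ, List.reverse_cons, List.dropLast_concat]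
  refine ⟨rfl, fun k hk => ?_⟩
  simp only [List.mem_reverse, List.mem_map] at hk
  obtain ⟨i, -, rfl⟩ := hk
  exact Fin.succ_ne_zero i

/-- The matrix part `Ř^{(0m)}(t_1-t_m, λ̌) ⋯ Ř^{(02)}(t_1-t_2, λ̌+γ∑_{k≥3}ȟ^{(k)}) P̌^{(01)}` of the
operator under the trace; `lc` is the value of `λ̌` after the shift `Γ_j` has been applied. -/
def unwMat (τ γ : ℂ) {N mm : ℕ} (hpos : 0 < mm) (t : Fin mm → ℂ) (lc : Fin (N - 1) → ℂ) :
    Matrix (Fin (N - 1) × (Fin mm → Fin (N - 1)))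
      (Fin (N - 1) × (Fin mm → Fin (N - 1))) ℂ :=
  (((List.finRange mm).reverse.dropLast).map
    (fun k => cR0k τ γ (t ⟨0, hpos⟩ - t k) γ lc k (Finset.univ.filter (fun r => k < r)))).prod *
    permM ⟨0, hpos⟩

lemma unwMat_wt {τ γ : ℂ} {N mm : ℕ} {hpos : 0 < mm} {t : Fin mm → ℂ} {lc : Fin (N - 1) → ℂ}
    {p q : Fin (N - 1) × (Fin mm → Fin (N - 1))} (h : unwMat τ γ hpos t lc p q ≠ 0) :
    wt p = wt q := by
  rw [unwMat, Matrix.mul_apply] at h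
  obtain ⟨r, -, hr⟩ := Finset.exists_ne_zero_of_sum_ne_zero h
  rw [← permM_wt (right_ne_zero_of_mul hr)]
  refine prod_conserved wt _ (fun A hA p q hpq => ?_) _ _ (left_ne_zero_of_mul hr)
  obtain ⟨k, -, rfl⟩ := List.mem_map.mp hA
  exact cR0k_wt hpq

/-- The R-matrices do not act on the first quantum factor, so `P̌^{(01)}` transports the auxiliary
index to it. -/
lemma unwMat_first {τ γ : ℂ} {N mm : ℕ} {hpos : 0 < mm} {t : Fin mm → ℂ} {lc : Fin (N - 1) → ℂ}
    {p q : Fin (N - 1) × (Fin mm → Fin (N - 1))} (h : unwMat τ γ hpos t lc p q ≠ 0) :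
    p.2 ⟨0, hpos⟩ = q.1 := by
  rw [unwMat, Matrix.mul_apply] at h
  obtain ⟨r, -, hr⟩ := Finset.exists_ne_zero_of_sum_ne_zero h
  have h1 : r.2 ⟨0, hpos⟩ = q.1 := by
    have := right_ne_zero_of_mul hr
    unfold permM at this
    split_ifs at this with h1
    · exact h1.2.2
    · exact absurd rfl this
  rw [← h1]
  refine prod_conserved (fun p => p.2 ⟨0, hpos⟩) _ (fun A hA p q hpq => ?_) _ _
    (left_ne_zero_of_mul hr)
  obtain ⟨k, hk, rfl⟩ := List.mem_map.mp hA
  unfold cR0k at hpq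
  split_ifs at hpq with h2
  · exact h2 _ ((finRange_reverse_split hpos).2 k hk).symm
  · exact absurd rfl hpq

/-- On the weight space of `(j, f)`, the operator under the trace agrees with the monodromy matrix of
the transfer matrix `𝒯̌^{(m,…,1)}` at `z = t₁`. -/
lemma unwMat_eq_cProd {τ γ : ℂ} {N mm : ℕ} (hpos : 0 < mm) (t : Fin mm → ℂ)
    (lc : Fin (N - 1) → ℂ) (hγ : theta τ γ ≠ 0) (j : Fin (N - 1)) (f : Fin mm → Fin (N - 1))
    (hlc : ∀ a b, a ≠ b → theta τ
      ((lc a + γ * (((Finset.univ.filter (fun r => f r = a)).card : ℕ) : ℂ)) -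
        (lc b + γ * (((Finset.univ.filter (fun r => f r = b)).card : ℕ) : ℂ))) ≠ 0)
    (q : Fin (N - 1) × (Fin mm → Fin (N - 1))) :
    unwMat τ γ hpos t (fun a => lc a - if a = j then γ else 0) (j, f) q
      = cProd τ γ (t ⟨0, hpos⟩) (-γ)
        (fun a => lc a + γ * (((Finset.univ.filter (fun r => f r = a)).card : ℕ) : ℂ)) t
        (seqRev mm) (j, f) q := by
  have hfirst : Finset.univ.filter (fun r : Fin mm => r < ⟨0, hpos⟩) = ∅ := by
    ext r
    simp [Fin.lt_def]
  rw [seqRev, cProd_eq_prod _ _ _ _ _ _ _ (by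
      rw [List.pairwise_reverse]; exact List.pairwise_lt_finRange mm) (by simp),
    (finRange_reverse_split hpos).1, List.map_append, List.prod_append, List.map_singleton,
    List.prod_singleton, hfirst, sub_self, cR0k_zero _ _ hγ hlc, unwMat, Matrix.mul_apply,
    Matrix.mul_apply]
  refine Finset.sum_congr rfl fun r _ => ?_
  congr 1
  exact prod_congr_on wt (wt (j, f)) _ _ _ (fun k _ p q => cR0k_wt)
    (fun k _ p q hp => cR0k_match τ γ _ lc k j f p q hp) _ _ rfl

/-! ### Scalar coefficients -/

lemma card_eq_of_wt {K mm : ℕ} {j : Fin K} {f g : Fin mm → Fin K} (h : wt (j, f) = wt (j, g))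
    (a : Fin K) : (Finset.univ.filter (fun k => f k = a)).card
      = (Finset.univ.filter (fun k => g k = a)).card := by
  have := congrFun h a
  simp only [wt, ← Finset.card_filter] at this
  omega

lemma inv_alpha (τ γ u w : ℂ) : (alpha τ γ u w)⁻¹
    = theta τ (u - γ) / theta τ u * (theta τ w / theta τ (w + γ)) := by
  rw [alpha, inv_div, mul_div_mul_comm]

/-- The coefficient of `ψ̌` in the first part of the unwanted term, on a basis vector `f` of
`W̌[0]`. -/
lemma first_term (τ γ c1 : ℂ) (M l mm : ℕ) (hpos : 0 < mm) (z : ℂ) (t : Fin mm → ℂ)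
    (lam : Fin (M + 2) → ℂ) (f : Fin mm → Fin (M + 1))
    (hf : ∀ a, (Finset.univ.filter (fun k => f k = a)).card = l + 1)
    (hl : ∀ a : Fin (M + 1), ∀ c : ℕ, c ≤ l + 2 →
      theta τ (lam (iot a) - lam 0 + (c : ℂ) * γ) ≠ 0)
    (htz : theta τ (t ⟨0, hpos⟩ - z) ≠ 0) (htz' : theta τ (t ⟨0, hpos⟩ - z - γ) ≠ 0) :
    (∏ p ∈ Finset.univ.erase (⟨0, hpos⟩ : Fin mm),
          (alpha τ γ (t p - t ⟨0, hpos⟩)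
            ((lam (iot (f p)) + γ * ((cntGT f p : ℕ) : ℂ)) - (lam 0 - γ)))⁻¹) *
        (-(beta τ γ (t ⟨0, hpos⟩ - z) ((lam 0 - γ) -
              (lam (iot (f ⟨0, hpos⟩)) + γ * ((cntGT f ⟨0, hpos⟩ : ℕ) : ℂ)))) /
          alpha τ γ (t ⟨0, hpos⟩ - z)
            ((lam (iot (f ⟨0, hpos⟩)) + γ * ((cntGT f ⟨0, hpos⟩ : ℕ) : ℂ)) - (lam 0 - γ))) *
        Gfun τ γ c1 (l + 1) (shift1 γ lam 0)
      = Gfun τ γ c1 (l + 1) lam * (theta τ γ / theta τ (t ⟨0, hpos⟩ - z)) *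
          (theta τ (z - t ⟨0, hpos⟩ + lam (iot (f ⟨0, hpos⟩)) - lam 0 + ((l : ℂ) + 1) * γ) /
            theta τ (lam (iot (f ⟨0, hpos⟩)) - lam 0 + ((l : ℂ) + 1) * γ)) *
          ((∏ k ∈ Finset.univ.erase (⟨0, hpos⟩ : Fin mm),
              theta τ (t ⟨0, hpos⟩ - t k + γ) / theta τ (t ⟨0, hpos⟩ - t k)) *
            Complex.exp (-(γ * c1))) := by
  set a0 : Fin mm := ⟨0, hpos⟩ with ha0
  have hc0 : cntGT f a0 = l := cntGT_first hpos f hf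
  obtain ⟨h, hh⟩ : ∃ h : Fin (M + 1) → ℕ → ℂ,
      h = fun a (c : ℕ) => theta τ (lam (iot a) - lam 0 + (c : ℂ) * γ) := ⟨_, rfl⟩
  have hne : ∀ a c, c ≤ l + 2 → h a c ≠ 0 := by rw [hh]; exact hl
  have hA : ∏ p ∈ Finset.univ.erase a0, (alpha τ γ (t p - t a0)
        ((lam (iot (f p)) + γ * ((cntGT f p : ℕ) : ℂ)) - (lam 0 - γ)))⁻¹
      = (∏ k ∈ Finset.univ.erase a0, theta τ (t a0 - t k + γ) / theta τ (t a0 - t k)) *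
        ∏ p ∈ Finset.univ.erase a0, h (f p) (cntGT f p + 1) / h (f p) (cntGT f p + 2) := by
    rw [← Finset.prod_mul_distrib]
    refine Finset.prod_congr rfl fun p _ => ?_
    rw [inv_alpha, hh, show t p - t a0 - γ = -(t a0 - t p + γ) by ring, theta_neg,
      theta_sub_comm τ (t p), neg_div_neg_eq]
    congr 3 <;> · push_cast; ring
  have htel : (h (f a0) (l + 1) / h (f a0) (l + 2)) *
      ∏ p ∈ Finset.univ.erase a0, h (f p) (cntGT f p + 1) / h (f p) (cntGT f p + 2)
      = (∏ a, h a 1) / ∏ a, h a (l + 2) := by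
    have e := Finset.mul_prod_erase Finset.univ
      (fun p => h (f p) (cntGT f p + 1) / h (f p) (cntGT f p + 2)) (Finset.mem_univ a0)
    simp only [hc0] at e
    rw [e, prod_cntGT f hf (fun a c => h a (c + 1) / h a (c + 2)), ← Finset.prod_div_distrib]
    refine Finset.prod_congr rfl fun a _ => ?_
    suffices ∀ n ≤ l + 1, ∏ c ∈ Finset.range n, h a (c + 1) / h a (c + 2)
        = h a 1 / h a (n + 1) from this _ le_rfl
    intro n
    induction n with
    | zero => intro _; simp [hne a 1 (by omega)]
    | succ n ih =>
      intro hn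
      rw [Finset.prod_range_succ, ih (by omega)]
      have := hne a (n + 1) (by omega)
      field_simp
  have hG := Gfun_shift_zero τ γ c1 (l + 1) M lam
  have hG1 : ∏ a : Fin (M + 1), theta τ (lam (iot a) - lam 0 + γ) = ∏ a, h a 1 := by
    rw [hh]; simp
  have hG2 : ∏ a : Fin (M + 1), theta τ (lam (iot a) - lam 0 + (((l + 1 : ℕ) : ℂ) + 1) * γ)
      = ∏ a, h a (l + 2) := by
    rw [hh]
    refine Finset.prod_congr rfl fun a _ => ?_
    congr 1; push_cast; ring
  rw [hG1, hG2] at hG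
  have hP1 : ∏ a, h a 1 ≠ 0 := Finset.prod_ne_zero_iff.mpr fun a _ => hne a 1 (by omega)
  have hP2 : ∏ a, h a (l + 2) ≠ 0 := Finset.prod_ne_zero_iff.mpr fun a _ => hne a _ le_rfl
  have n1 := hne (f a0) (l + 1) (by omega)
  have n2 := hne (f a0) (l + 2) (by omega)
  have hB : -(beta τ γ (t a0 - z) ((lam 0 - γ) -
          (lam (iot (f a0)) + γ * ((cntGT f a0 : ℕ) : ℂ)))) /
        alpha τ γ (t a0 - z) ((lam (iot (f a0)) + γ * ((cntGT f a0 : ℕ) : ℂ)) - (lam 0 - γ))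
      = theta τ (z - t a0 + lam (iot (f a0)) - lam 0 + ((l : ℂ) + 1) * γ) * theta τ γ /
        (theta τ (t a0 - z) * h (f a0) (l + 2)) := by
    rw [hc0, div_eq_mul_inv, inv_alpha, beta, neg_neg,
      show t a0 - z + (lam 0 - γ - (lam (iot (f a0)) + γ * (l : ℂ)))
        = -(z - t a0 + lam (iot (f a0)) - lam 0 + ((l : ℂ) + 1) * γ) by ring, theta_neg,
      show lam 0 - γ - (lam (iot (f a0)) + γ * (l : ℂ))
        = -(lam (iot (f a0)) - lam 0 + ((l + 1 : ℕ) : ℂ) * γ) by push_cast; ring, theta_neg,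
      show lam (iot (f a0)) + γ * (l : ℂ) - (lam 0 - γ)
        = lam (iot (f a0)) - lam 0 + ((l + 1 : ℕ) : ℂ) * γ by push_cast; ring,
      show lam (iot (f a0)) - lam 0 + ((l + 1 : ℕ) : ℂ) * γ + γ
        = lam (iot (f a0)) - lam 0 + ((l + 2 : ℕ) : ℂ) * γ by push_cast; ring]
    have e1 : theta τ (lam (iot (f a0)) - lam 0 + ((l + 1 : ℕ) : ℂ) * γ) = h (f a0) (l + 1) := by
      rw [hh]
    have e2 : theta τ (lam (iot (f a0)) - lam 0 + ((l + 2 : ℕ) : ℂ) * γ) = h (f a0) (l + 2) := by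
      rw [hh]
    rw [e1, e2]
    field_simp
  have e1 : theta τ (lam (iot (f a0)) - lam 0 + ((l : ℂ) + 1) * γ) = h (f a0) (l + 1) := by
    rw [hh]; push_cast; rfl
  rw [hA, hB, e1]
  have hE : ∏ p ∈ Finset.univ.erase a0, h (f p) (cntGT f p + 1) / h (f p) (cntGT f p + 2)
      = (∏ a, h a 1) / (∏ a, h a (l + 2)) * (h (f a0) (l + 2) / h (f a0) (l + 1)) := by
    rw [← htel]; field_simp
  have hGs : Gfun τ γ c1 (l + 1) (shift1 γ lam 0) = Complex.exp (-(γ * c1)) *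
      Gfun τ γ c1 (l + 1) lam * (∏ a, h a (l + 2)) / ∏ a, h a 1 := eq_div_of_mul_eq hP1 hG
  rw [hE, hGs]
  generalize (∏ k ∈ Finset.univ.erase a0,
    theta τ (t a0 - t k + γ) / theta τ (t a0 - t k)) = Kp
  field_simp

/-- The scalar coefficient of the second part of the unwanted term at auxiliary index `j`, with
`d = Nℓ`. -/
lemma second_term (τ γ c1 : ℂ) (M l mm d : ℕ) (hpos : 0 < mm) (hd : d = l + 1 + mm) (z : ℂ)
    (t : Fin mm → ℂ) (lam : Fin (M + 2) → ℂ) (j : Fin (M + 1))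
    (hl : ∀ c : ℕ, c ≤ d → theta τ (lam (iot j) - lam 0 + (c : ℂ) * γ) ≠ 0)
    (hzt' : theta τ (z - t ⟨0, hpos⟩ - γ) ≠ 0) :
    (-(beta τ γ (z - t ⟨0, hpos⟩) (lam (iot j) - (lam 0 - ((l : ℂ) + 1) * γ))) /
            alpha τ γ (z - t ⟨0, hpos⟩) (lam (iot j) - (lam 0 - ((l : ℂ) + 1) * γ))) *
          (∏ p ∈ Finset.univ.erase (⟨0, hpos⟩ : Fin mm),
            (alpha τ γ (t ⟨0, hpos⟩ - t p)
              (lam (iot j) - (lam 0 - (((l : ℂ) + 1) + (p.1 : ℂ)) * γ)))⁻¹) *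
          PhiFn τ γ d (t ⟨0, hpos⟩) lam j * Gfun τ γ c1 (l + 1) (shift1 γ lam (iot j))
      = -(Gfun τ γ c1 (l + 1) lam * (theta τ γ / theta τ (t ⟨0, hpos⟩ - z)) *
          (theta τ (z - t ⟨0, hpos⟩ + lam (iot j) - lam 0 + ((l : ℂ) + 1) * γ) /
            theta τ (lam (iot j) - lam 0 + ((l : ℂ) + 1) * γ)) *
          (theta τ (t ⟨0, hpos⟩) / theta τ (t ⟨0, hpos⟩ - (d : ℂ) * γ) *
            ∏ k ∈ Finset.univ.erase (⟨0, hpos⟩ : Fin mm),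
              theta τ (t ⟨0, hpos⟩ - t k - γ) / theta τ (t ⟨0, hpos⟩ - t k))) := by
  set a0 : Fin mm := ⟨0, hpos⟩ with ha0
  obtain ⟨h, hh⟩ : ∃ h : ℕ → ℂ,
      h = fun (c : ℕ) => theta τ (lam (iot j) - lam 0 + (c : ℂ) * γ) := ⟨_, rfl⟩
  have hne : ∀ c, c ≤ d → h c ≠ 0 := by rw [hh]; exact hl
  have hA : ∏ p ∈ Finset.univ.erase a0, (alpha τ γ (t a0 - t p)
        (lam (iot j) - (lam 0 - (((l : ℂ) + 1) + (p.1 : ℂ)) * γ)))⁻¹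
      = (∏ k ∈ Finset.univ.erase a0, theta τ (t a0 - t k - γ) / theta τ (t a0 - t k)) *
        ∏ p ∈ Finset.univ.erase a0, h (l + 1 + p.1) / h (l + 1 + p.1 + 1) := by
    rw [← Finset.prod_mul_distrib]
    refine Finset.prod_congr rfl fun p _ => ?_
    rw [inv_alpha, hh]
    congr 3 <;> · push_cast; ring
  have htel : h (l + 1) / h (l + 2) *
      ∏ p ∈ Finset.univ.erase a0, h (l + 1 + p.1) / h (l + 1 + p.1 + 1) = h (l + 1) / h d := by
    have e := Finset.mul_prod_erase Finset.univ
      (fun p : Fin mm => h (l + 1 + p.1) / h (l + 1 + p.1 + 1)) (Finset.mem_univ a0)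
    refine e.trans ?_
    rw [Fin.prod_univ_eq_prod_range (fun p => h (l + 1 + p) / h (l + 1 + p + 1)) mm, hd]
    suffices ∀ n ≤ mm, ∏ c ∈ Finset.range n, h (l + 1 + c) / h (l + 1 + c + 1)
        = h (l + 1) / h (l + 1 + n) from this _ le_rfl
    intro n
    induction n with
    | zero => intro _; simp [hne (l + 1) (by omega)]
    | succ n ih =>
      intro hn
      rw [Finset.prod_range_succ, ih (by omega)]
      have := hne (l + 1 + n) (by omega)
      rw [← add_assoc]
      field_simp
  have n0 := hne 0 (by omega)
  have n1 := hne (l + 1) (by omega)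
  have n2 := hne (l + 2) (by omega)
  have nd := hne d le_rfl
  have hG := Gfun_shift_iot τ γ c1 (l + 1) M lam j
  rw [show theta τ (lam (iot j) - lam 0 + ((l + 1 : ℕ) : ℂ) * γ) = h (l + 1) by rw [hh],
    show theta τ (lam (iot j) - lam 0) = h 0 by rw [hh]; simp] at hG
  have hE : ∏ p ∈ Finset.univ.erase a0, h (l + 1 + p.1) / h (l + 1 + p.1 + 1)
      = h (l + 2) / h d := by
    have : ∏ p ∈ Finset.univ.erase a0, h (l + 1 + p.1) / h (l + 1 + p.1 + 1)
      = (h (l + 1) / h d) * (h (l + 2) / h (l + 1)) := by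
      rw [← htel]; field_simp
    rw [this]; field_simp
  have hPhi : PhiFn τ γ d (t a0) lam j
      = theta τ (t a0) / theta τ (t a0 - (d : ℂ) * γ) * (h d / h 0) := by
    rw [PhiFn, mul_div_mul_comm, hh]; simp
  have hC : -(beta τ γ (z - t a0) (lam (iot j) - (lam 0 - ((l : ℂ) + 1) * γ))) /
        alpha τ γ (z - t a0) (lam (iot j) - (lam 0 - ((l : ℂ) + 1) * γ))
      = -(theta τ (z - t a0 + lam (iot j) - lam 0 + ((l : ℂ) + 1) * γ) * theta τ γ /
        (theta τ (t a0 - z) * h (l + 2))) := by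
    rw [div_eq_mul_inv, inv_alpha, beta, neg_neg,
      show z - t a0 + (lam (iot j) - (lam 0 - ((l : ℂ) + 1) * γ))
        = z - t a0 + lam (iot j) - lam 0 + ((l : ℂ) + 1) * γ by ring,
      show theta τ (lam (iot j) - (lam 0 - ((l : ℂ) + 1) * γ)) = h (l + 1) by
        rw [hh]; dsimp only; congr 1; push_cast; ring,
      show theta τ (lam (iot j) - (lam 0 - ((l : ℂ) + 1) * γ) + γ) = h (l + 2) by
        rw [hh]; dsimp only; congr 1; push_cast; ring, theta_sub_comm τ (t a0) z]
    field_simp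
  rw [hA, hE, hPhi, hC, show theta τ (lam (iot j) - lam 0 + ((l : ℂ) + 1) * γ) = h (l + 1) by
    rw [hh]; push_cast; rfl, eq_div_of_mul_eq n1 hG]
  generalize (∏ k ∈ Finset.univ.erase a0,
    theta τ (t a0 - t k - γ) / theta τ (t a0 - t k)) = Km
  field_simp

/-! ### Reduction of the trace to the transfer matrix -/

/-- The transfer matrix at `z = t₁` with the shifts `Γ̌^{(1,…,m)}` resolved: by weight conservation
they cancel in the argument of `ψ̌`. -/
lemma cTransfer_apply (τ γ : ℂ) {M mm : ℕ} (hpos : 0 < mm) (t : Fin mm → ℂ)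
    (ψc : (Fin (M + 1) → ℂ) → (Fin mm → Fin (M + 1)) → ℂ) (lam : Fin (M + 2) → ℂ)
    (f : Fin mm → Fin (M + 1)) :
    cTransfer τ γ t (seqRev mm) (t ⟨0, hpos⟩) (fun l' h => ψc (fun a => l' (iot a)) h) lam f
      = ∑ j : Fin (M + 1), ∑ g, cProd (N := M + 2) τ γ (t ⟨0, hpos⟩) (-γ)
          (fun a => lam (iot a) + γ * (((Finset.univ.filter (fun r => f r = a)).card : ℕ) : ℂ)) t
          (seqRev mm) (j, f) (j, g) *
        ψc (fun a => shift1 γ lam (iot j) (iot a)) g := by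
  have harg : ∀ (f : Fin mm → Fin (M + 1)) (a : Fin (M + 1)),
      Finset.univ.filter (fun k => (iot (f k) : Fin (M + 2)) = iot a)
        = Finset.univ.filter (fun k => f k = a) := by
    intro f a
    ext k
    simp only [Finset.mem_filter, Finset.mem_univ, true_and]
    exact iot_injective.eq_iff
  unfold cTransfer gammaTot
  refine Finset.sum_congr rfl fun j _ => Finset.sum_congr rfl fun g _ => ?_
  have hlc : (fun a : Fin (M + 1) => lam (iot a) + 1 * γ *
        (((Finset.univ.filter (fun k => (iot (f k) : Fin (M + 2)) = iot a)).card : ℕ) : ℂ))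
      = fun a => lam (iot a) +
        γ * (((Finset.univ.filter (fun r => f r = a)).card : ℕ) : ℂ) := by
    funext a
    rw [one_mul, harg]
  refine (congrArg (fun lc => cProd (N := M + 2) τ γ (t ⟨0, hpos⟩) (-γ) lc t (seqRev mm)
    (j, f) (j, g) * _) hlc).trans ?_
  by_cases h0 : cProd (N := M + 2) τ γ (t ⟨0, hpos⟩) (-γ)
      (fun a => lam (iot a) + γ * (((Finset.univ.filter (fun r => f r = a)).card : ℕ) : ℂ)) t
      (seqRev mm) (j, f) (j, g) = 0
  · rw [h0, zero_mul, zero_mul]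
  · have hw := card_eq_of_wt (cProd_wt h0)
    congr 1
    refine congrArg (fun lc => ψc lc g) (funext fun a => ?_)
    have := hw a
    simp only [shift1]
    rw [harg, harg, this]
    ring

lemma shift1_iot (γ : ℂ) {M : ℕ} (lam : Fin (M + 2) → ℂ) (j : Fin (M + 1)) :
    (fun a : Fin (M + 1) => shift1 γ lam (iot j) (iot a))
      = fun a => lam (iot a) - if a = j then γ else 0 := by
  funext a
  rw [shift1, if_congr iot_injective.eq_iff rfl rfl]

lemma cTransfer_eq_zero (τ γ : ℂ) {M mm : ℕ} (hpos : 0 < mm) (t : Fin mm → ℂ)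
    (ψc : (Fin (M + 1) → ℂ) → (Fin mm → Fin (M + 1)) → ℂ) (lam : Fin (M + 2) → ℂ)
    (f : Fin mm → Fin (M + 1)) (hg : ∀ lc j g, wt (j, f) = wt (j, g) → ψc lc g = 0) :
    cTransfer τ γ t (seqRev mm) (t ⟨0, hpos⟩) (fun l' h => ψc (fun a => l' (iot a)) h) lam f
      = 0 := by
  rw [cTransfer_apply]
  refine Finset.sum_eq_zero fun j _ => Finset.sum_eq_zero fun g _ => ?_
  by_contra h
  exact right_ne_zero_of_mul h (hg _ j g (cProd_wt (left_ne_zero_of_mul h)))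

lemma unwMat_sum_eq_zero (τ γ : ℂ) {M mm : ℕ} (hpos : 0 < mm) (t : Fin mm → ℂ)
    (ψc : (Fin (M + 1) → ℂ) → (Fin mm → Fin (M + 1)) → ℂ) (lam : Fin (M + 2) → ℂ)
    (f : Fin mm → Fin (M + 1)) (hg : ∀ lc j g, wt (j, f) = wt (j, g) → ψc lc g = 0)
    (C Gs : Fin (M + 1) → ℂ) :
    ∑ j, C j * ∑ g, unwMat (N := M + 2) τ γ hpos t (fun a => shift1 γ lam (iot j) (iot a))
      (j, f) (j, g) * (Gs j * ψc (fun a => shift1 γ lam (iot j) (iot a)) g) = 0 := by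
  refine Finset.sum_eq_zero fun j _ => mul_eq_zero_of_right _ (Finset.sum_eq_zero fun g _ => ?_)
  by_contra h
  exact right_ne_zero_of_mul (right_ne_zero_of_mul h)
    (hg _ j g (unwMat_wt (left_ne_zero_of_mul h)))

/-- On `W̌[0]` the trace reduces to the single auxiliary index carried by the first
quantum factor, and what remains is the transfer matrix at `z = t₁`. -/
lemma unwMat_sum (τ γ : ℂ) {M mm ℓ : ℕ} (hpos : 0 < mm) (t : Fin mm → ℂ)
    (ψc : (Fin (M + 1) → ℂ) → (Fin mm → Fin (M + 1)) → ℂ) (lam : Fin (M + 2) → ℂ)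
    (f : Fin mm → Fin (M + 1))
    (hf : ∀ a, (Finset.univ.filter (fun k => f k = a)).card = ℓ)
    (hlc : ∀ a b : Fin (M + 1), a ≠ b → theta τ (lam (iot a) - lam (iot b)) ≠ 0)
    (hγ : theta τ γ ≠ 0) (C Gs : Fin (M + 1) → ℂ) :
    ∑ j, C j * ∑ g, unwMat (N := M + 2) τ γ hpos t (fun a => shift1 γ lam (iot j) (iot a))
      (j, f) (j, g) * (Gs j * ψc (fun a => shift1 γ lam (iot j) (iot a)) g)
      = C (f ⟨0, hpos⟩) * Gs (f ⟨0, hpos⟩) *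
        cTransfer τ γ t (seqRev mm) (t ⟨0, hpos⟩)
          (fun l' h => ψc (fun a => l' (iot a)) h) lam f := by
  rw [cTransfer_apply, Finset.mul_sum]
  refine Finset.sum_congr rfl fun j _ => ?_
  rw [Finset.mul_sum, Finset.mul_sum]
  refine Finset.sum_congr rfl fun g _ => ?_
  have hE : unwMat (N := M + 2) τ γ hpos t (fun a => shift1 γ lam (iot j) (iot a)) (j, f) (j, g)
      = cProd (N := M + 2) τ γ (t ⟨0, hpos⟩) (-γ)
          (fun a => lam (iot a) + γ * (((Finset.univ.filter (fun r => f r = a)).card : ℕ) : ℂ)) t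
          (seqRev mm) (j, f) (j, g) := by
    refine Eq.trans ?_ (unwMat_eq_cProd (N := M + 2) hpos t (fun a => lam (iot a)) hγ j f ?_ (j, g))
    · exact congrArg (fun lc => unwMat (N := M + 2) τ γ hpos t lc (j, f) (j, g))
        (shift1_iot γ lam j)
    · intro a b hab
      have ha := hf a
      have hb := hf b
      rw [show (Finset.univ.filter (fun r => f r = a)).card = ℓ from ha,
        show (Finset.univ.filter (fun r => f r = b)).card = ℓ from hb, add_sub_add_right_eq_sub]
      exact hlc a b hab
  by_cases h0 : unwMat (N := M + 2) τ γ hpos t (fun a => shift1 γ lam (iot j) (iot a))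
      (j, f) (j, g) = 0
  · rw [← hE, h0]
    ring
  · have hj : f ⟨0, hpos⟩ = j := unwMat_first h0
    rw [hj, ← hE]
    ring

/-- the first "unwanted term" of the Bethe ansatz factorizes:
with `g(λ) = G(λ)ψ̌(λ̌)` for a `W̌[0]`-valued `ψ̌`, the expression
`g₁(λ) = [a^{(m)}(t_m-t_1;λ₁-γ,λ̌) ⋯ a^{(2)}(t_2-t_1;λ₁-γ,λ̌+γ∑_{k≥3}ȟ^{(k)})
   b^{(1)}(t_1-z;λ₁-γ,λ̌+γ∑_{k≥2}ȟ^{(k)})] g(λ₁-γ,λ̌)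
 + tr^{(0)}[c^{(0)}(z-t_1;λ₁-ℓγ,λ̌) a^{(0)}(t_1-t_2;λ₁-(ℓ+1)γ,λ̌) ⋯
   a^{(0)}(t_1-t_m;λ₁-(ℓ+m-1)γ,λ̌) Φ̂^{(0)}(t_1) Ř^{(0m)}(t_1-t_m,λ̌) ⋯
   Ř^{(02)}(t_1-t_2,λ̌+γ∑_{k≥3}ȟ^{(k)}) P̌^{(01)}] g(λ)`
equals
`G(λ) (θ(γ)/θ(t_1-z)) X^{(1)}(z,t_1,λ) [K₊(t) e^{-γc₁}
 − (θ(t_1)/θ(t_1-Nℓγ)) K₋(t) 𝒯̌^{(m,…,1)}(t_1)] ψ̌(λ̌)`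
(`N = M+2`, `ℓ = l+1`, `m = (N-1)ℓ`;
`[a(w;μ₁,μ̌)]_{jj} = 1/α(w,μ_j-μ₁)`, `[b(w;μ₁,μ̌)]_{jj} = -β(w,μ₁-μ_j)/α(w,μ_j-μ₁)`,
`[c(w;μ₁,μ̌)]_{jj} = -β(w,μ_j-μ₁)/α(w,μ_j-μ₁)`,
`[X(z,t,λ)]_{jj} = θ(z-t+λ_j-λ₁+ℓγ)/θ(λ_j-λ₁+ℓγ)`,
`K_± = ∏_{k=2}^m θ(t_1-t_k±γ)/θ(t_1-t_k)`; the `Γ_j` inside `Φ̂^{(0)}(t_1)`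
shifts the argument of everything to its right). -/
theorem statement14 (τ γ c1 : ℂ) (hτ : 0 < τ.im) (M l : ℕ) (z : ℂ)
    (t : Fin ((M + 1) * (l + 1)) → ℂ)
    (ψc : (Fin (M + 1) → ℂ) → (Fin ((M + 1) * (l + 1)) → Fin (M + 1)) → ℂ)
    (hψ0 : ∀ lc f, ¬ (∀ a : Fin (M + 1),
      (Finset.univ.filter (fun k => f k = a)).card = l + 1) → ψc lc f = 0)
    (lam : Fin (M + 2) → ℂ)
    (hlam : ∀ c : ℤ, |c| ≤ 3 * ((M + 2) * (l + 1) + 2) →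
      ∀ a b : Fin (M + 2), a ≠ b → theta τ (lam a - lam b + c * γ) ≠ 0)
    (hzt : ∀ c : ℤ, |c| ≤ (M + 2) * (l + 1) + 2 →
      (∀ k, theta τ (z - t k + c * γ) ≠ 0) ∧
      (∀ k k', k ≠ k' → theta τ (t k - t k' + c * γ) ≠ 0) ∧
      (1 ≤ c → theta τ (z - c * γ) ≠ 0 ∧ ∀ k, theta τ (t k - c * γ) ≠ 0)) :
    ∀ f,
      (∏ p ∈ Finset.univ.erase (⟨0, Nat.mul_pos M.succ_pos l.succ_pos⟩ :
            Fin ((M + 1) * (l + 1))),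
          (alpha τ γ (t p - t ⟨0, Nat.mul_pos M.succ_pos l.succ_pos⟩)
            ((lam (iot (f p)) + γ * ((cntGT f p : ℕ) : ℂ)) - (lam 0 - γ)))⁻¹) *
        (-(beta τ γ (t ⟨0, Nat.mul_pos M.succ_pos l.succ_pos⟩ - z)
            ((lam 0 - γ) -
              (lam (iot (f ⟨0, Nat.mul_pos M.succ_pos l.succ_pos⟩)) +
                γ * ((cntGT f ⟨0, Nat.mul_pos M.succ_pos l.succ_pos⟩ : ℕ) : ℂ)))) /
          alpha τ γ (t ⟨0, Nat.mul_pos M.succ_pos l.succ_pos⟩ - z)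
            ((lam (iot (f ⟨0, Nat.mul_pos M.succ_pos l.succ_pos⟩)) +
                γ * ((cntGT f ⟨0, Nat.mul_pos M.succ_pos l.succ_pos⟩ : ℕ) : ℂ)) -
              (lam 0 - γ))) *
        (Gfun τ γ c1 (l + 1) (shift1 γ lam 0) *
          ψc (fun a => (shift1 γ lam 0) (iot a)) f)
      + (∑ j : Fin (M + 1),
          (-(beta τ γ (z - t ⟨0, Nat.mul_pos M.succ_pos l.succ_pos⟩)
              (lam (iot j) - (lam 0 - ((l : ℂ) + 1) * γ))) /
            alpha τ γ (z - t ⟨0, Nat.mul_pos M.succ_pos l.succ_pos⟩)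
              (lam (iot j) - (lam 0 - ((l : ℂ) + 1) * γ))) *
          (∏ p ∈ Finset.univ.erase (⟨0, Nat.mul_pos M.succ_pos l.succ_pos⟩ :
              Fin ((M + 1) * (l + 1))),
            (alpha τ γ (t ⟨0, Nat.mul_pos M.succ_pos l.succ_pos⟩ - t p)
              (lam (iot j) - (lam 0 - (((l : ℂ) + 1) + (p.1 : ℂ)) * γ)))⁻¹) *
          PhiFn τ γ ((M + 2) * (l + 1)) (t ⟨0, Nat.mul_pos M.succ_pos l.succ_pos⟩) lam j *
          ∑ g, ((((List.finRange ((M + 1) * (l + 1))).reverse.dropLast).map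
              (fun k => cR0k τ γ (t ⟨0, Nat.mul_pos M.succ_pos l.succ_pos⟩ - t k) γ
                (fun a => (shift1 γ lam (iot j)) (iot a)) k
                (Finset.univ.filter (fun r => k < r)))).prod *
              permM (N := M + 2) (⟨0, Nat.mul_pos M.succ_pos l.succ_pos⟩ : Fin ((M + 1) * (l + 1))))
              (j, f) (j, g) *
            (Gfun τ γ c1 (l + 1) (shift1 γ lam (iot j)) *
              ψc (fun a => (shift1 γ lam (iot j)) (iot a)) g))
      = Gfun τ γ c1 (l + 1) lam *
          (theta τ γ / theta τ (t ⟨0, Nat.mul_pos M.succ_pos l.succ_pos⟩ - z)) *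
          (theta τ (z - t ⟨0, Nat.mul_pos M.succ_pos l.succ_pos⟩ +
              lam (iot (f ⟨0, Nat.mul_pos M.succ_pos l.succ_pos⟩)) - lam 0 +
              ((l : ℂ) + 1) * γ) /
            theta τ (lam (iot (f ⟨0, Nat.mul_pos M.succ_pos l.succ_pos⟩)) - lam 0 +
              ((l : ℂ) + 1) * γ)) *
          ((∏ k ∈ Finset.univ.erase (⟨0, Nat.mul_pos M.succ_pos l.succ_pos⟩ :
                Fin ((M + 1) * (l + 1))),
              theta τ (t ⟨0, Nat.mul_pos M.succ_pos l.succ_pos⟩ - t k + γ) /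
                theta τ (t ⟨0, Nat.mul_pos M.succ_pos l.succ_pos⟩ - t k)) *
              Complex.exp (-(γ * c1)) * ψc (fun a => lam (iot a)) f
            - theta τ (t ⟨0, Nat.mul_pos M.succ_pos l.succ_pos⟩) /
                theta τ (t ⟨0, Nat.mul_pos M.succ_pos l.succ_pos⟩ -
                  (((M + 2) * (l + 1) : ℕ) : ℂ) * γ) *
              ((∏ k ∈ Finset.univ.erase (⟨0, Nat.mul_pos M.succ_pos l.succ_pos⟩ :
                  Fin ((M + 1) * (l + 1))),
                theta τ (t ⟨0, Nat.mul_pos M.succ_pos l.succ_pos⟩ - t k - γ) /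
                  theta τ (t ⟨0, Nat.mul_pos M.succ_pos l.succ_pos⟩ - t k)) *
                cTransfer τ γ t (seqRev ((M + 1) * (l + 1)))
                  (t ⟨0, Nat.mul_pos M.succ_pos l.succ_pos⟩)
                  (fun l' h => ψc (fun a => l' (iot a)) h) lam f)) := by
  intro (f : Fin ((M + 1) * (l + 1)) → Fin (M + 1))
  have hpos : 0 < (M + 1) * (l + 1) := Nat.mul_pos M.succ_pos l.succ_pos
  by_cases hγ : theta τ γ = 0
  · simp [beta, hγ]
  by_cases hf : ∀ a : Fin (M + 1), (Finset.univ.filter (fun k => f k = a)).card = l + 1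
  swap
  · -- Outside the zero weight space both sides vanish, as all operators conserve the weight.
    have hg : ∀ (lc : Fin (M + 1) → ℂ) (j : Fin (M + 1)) (g : _ → Fin (M + 1)),
        wt (j, f) = wt (j, g) → ψc lc g = 0 := by
      intro lc j g hw
      refine hψ0 lc g fun hc => hf fun a => ?_
      exact (card_eq_of_wt hw a).trans (hc a)
    rw [hψ0 _ f hf, hψ0 _ f hf, cTransfer_eq_zero τ γ hpos t ψc lam f hg]
    refine (congrArg₂ (· + ·) (mul_eq_zero_of_right _ (mul_zero _))
      (unwMat_sum_eq_zero τ γ hpos t ψc lam f hg _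
        (fun j => Gfun τ γ c1 (l + 1) (shift1 γ lam (iot j))))).trans ?_
    simp
  -- The telescoping products involve `θ(λ_a - λ₁ + cγ)` only for `0 ≤ c ≤ Nℓ`.
  have hc : ∀ c : ℕ, c ≤ (M + 2) * (l + 1) → |(c : ℤ)| ≤ (M + 2) * (l + 1) + 2 := by
    intro c hc
    rw [abs_of_nonneg (by positivity)]
    have : (c : ℤ) ≤ ((M + 2) * (l + 1) : ℕ) := by exact_mod_cast hc
    push_cast at this
    linarith
  have hl : ∀ a : Fin (M + 1), ∀ c : ℕ, c ≤ (M + 2) * (l + 1) →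
      theta τ (lam (iot a) - lam 0 + (c : ℂ) * γ) ≠ 0 := by
    intro a c h
    have := hlam c ((hc c h).trans (by nlinarith)) (iot a) 0 (iot_ne_zero a)
    exact_mod_cast this
  have hd : (M + 2) * (l + 1) = l + 1 + (M + 1) * (l + 1) := by ring
  have hlc : ∀ a b : Fin (M + 1), a ≠ b → theta τ (lam (iot a) - lam (iot b)) ≠ 0 := by
    intro a b hab
    have := hlam 0 (by simp; positivity) (iot a) (iot b) (fun h => hab (iot_injective h))
    simpa using this
  have hz : ∀ c : ℤ, |c| ≤ 1 → theta τ (z - t ⟨0, hpos⟩ + c * γ) ≠ 0 := by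
    intro c h
    exact (hzt c (h.trans (by nlinarith))).1 _
  have hz0 : theta τ (t ⟨0, hpos⟩ - z) ≠ 0 := by
    rw [theta_sub_comm]; simpa using hz 0 (by simp)
  have hz1 : theta τ (t ⟨0, hpos⟩ - z - γ) ≠ 0 := by
    rw [show t ⟨0, hpos⟩ - z - γ = -(z - t ⟨0, hpos⟩ + (1 : ℤ) * γ) by push_cast; ring, theta_neg]
    exact neg_ne_zero.mpr (hz 1 (by simp))
  have hz2 : theta τ (z - t ⟨0, hpos⟩ - γ) ≠ 0 := by
    have := hz (-1) (by simp)
    rwa [show z - t ⟨0, hpos⟩ + ((-1 : ℤ) : ℂ) * γ = z - t ⟨0, hpos⟩ - γ by push_cast; ring] at this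
  have h1 := first_term τ γ c1 M l _ hpos z t lam f hf
    (fun a c h => hl a c (by nlinarith)) hz0 hz1
  have h2 := second_term τ γ c1 M l _ _ hpos hd z t lam (f ⟨0, hpos⟩)
    (fun c h => hl _ c h) hz2
  have hsum := unwMat_sum τ γ hpos t ψc lam f hf hlc hγ
    (fun j => (-(beta τ γ (z - t ⟨0, hpos⟩) (lam (iot j) - (lam 0 - ((l : ℂ) + 1) * γ))) /
            alpha τ γ (z - t ⟨0, hpos⟩) (lam (iot j) - (lam 0 - ((l : ℂ) + 1) * γ))) *
          (∏ p ∈ Finset.univ.erase (⟨0, hpos⟩ : Fin ((M + 1) * (l + 1))),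
            (alpha τ γ (t ⟨0, hpos⟩ - t p)
              (lam (iot j) - (lam 0 - (((l : ℂ) + 1) + (p.1 : ℂ)) * γ)))⁻¹) *
          PhiFn τ γ ((M + 2) * (l + 1)) (t ⟨0, hpos⟩) lam j)
    (fun j => Gfun τ γ c1 (l + 1) (shift1 γ lam (iot j)))
  rw [h2] at hsum
  have hψ : (fun a : Fin (M + 1) => shift1 γ lam 0 (iot a)) = fun a => lam (iot a) := by
    funext a
    simp [shift1, iot_ne_zero a]
  refine (congrArg₂ (· + ·) ((mul_assoc _ _ _).symm.trans (congrArg₂ (· * ·) h1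
    (congrArg (ψc · f) hψ))) hsum).trans ?_
  have halg : ∀ A Kp e ψ T Km S : ℂ,
      A * (Kp * e) * ψ + -(A * (T * Km)) * S = A * (Kp * e * ψ - T * (Km * S)) := by
    intros; ring
  exact halg _ _ _ _ _ _ _
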